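/- For every 3-way cutting scheme ((Ω, 𝒜, μ), c) and every real number τ, if μ{ω : c(ω)(x) ≠ c(ω)(y)} ≤ τ·(1/2)·∑_{i=1}^3 |x_i − y_i| holds for all x, y ∈ Δ_3, then τ ≥ 12/11. (In words: the minimal maximum density for 3 terminals satisfies τ_3* ≥ 12/11, so the integrality gap of the geometric relaxation is exactly 12/11.) -/

import Mathlib

open MeasureTheory

/-!
The proof exhibits weights on the edges of the triangular grid of side `3q` in the simplex, `4q + 2`
on the boundary and `2` inside, after moving all grid points with a coordinate above `2/3` to the
corresponding vertex. The total weighted length of the edges is then `22q + 2`, whereas every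
labelling that is correct at the vertices separates edges of total weight at least `24q - 6`.
Averaging over the random cut and letting `q → ∞` gives `τ ≥ 24/22`.

The lower bound for a single labelling is a discrete form of Stokes' theorem. An antisymmetric
function of the two labels of an edge, the calibration, has circulation at most the number of
separated edges around each upward triangle, and at least minus that number around each downward
one. Upward minus downward triangles leave only the boundary, and there the calibration plus `4q`
per separated edge dominates the increments of a potential, which telescope along each side.
-/

namespace ThreeWayCut

open Finset

section Antidiagonal
variable {ι : Type*} [DecidableEq ι] {s : Finset ι} {a b : ι}

lemma add_single_mem_piAntidiag (ha : a ∈ s) {n k : ℕ} {x : ι → ℕ} :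
    x + Pi.single a k ∈ piAntidiag s (n + k) ↔ x ∈ piAntidiag s n := by
  simp only [mem_piAntidiag, Pi.add_apply, sum_add_distrib, sum_pi_single', if_pos ha,
    add_left_inj]
  grind

lemma sum_piAntidiag_filter_le {M : Type*} [AddCommMonoid M] (ha : a ∈ s) (n k : ℕ)
    (f : (ι → ℕ) → M) :
    ∑ x ∈ piAntidiag s (n + k) with k ≤ x a, f x
      = ∑ x ∈ piAntidiag s n, f (x + Pi.single a k) := by
  have hcancel : ∀ x ∈ {x ∈ piAntidiag s (n + k) | k ≤ x a},
      x - Pi.single a k + Pi.single a k = x := fun x hx =>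
    tsub_add_cancel_of_le (update_le_iff.2 ⟨(mem_filter.1 hx).2, fun _ _ => Nat.zero_le _⟩)
  refine sum_nbij' (· - Pi.single a k) (· + Pi.single a k) (fun x hx => ?_) (fun x hx => ?_)
    hcancel (fun x _ => add_tsub_cancel_right x _) (fun x hx => by rw [hcancel x hx])
  · rw [← add_single_mem_piAntidiag ha, hcancel x hx]
    exact (mem_filter.1 hx).1
  · exact mem_filter.2 ⟨(add_single_mem_piAntidiag ha).2 hx, by simp⟩

lemma piAntidiag_filter_eq_zero (s : Finset ι) (a : ι) (n : ℕ) :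
    {x ∈ piAntidiag s n | x a = 0} = piAntidiag (s.erase a) n := by
  ext x
  simp only [mem_filter, mem_piAntidiag, mem_erase]
  have hsum (h : x a = 0) : ∑ i ∈ s.erase a, x i = ∑ i ∈ s, x i := sum_erase s h
  grind

lemma sum_piAntidiag_succ {M : Type*} [AddCommMonoid M] (ha : a ∈ s) (n : ℕ) (f : (ι → ℕ) → M) :
    ∑ x ∈ piAntidiag s (n + 1), f x
      = ∑ x ∈ piAntidiag (s.erase a) (n + 1), f x
        + ∑ x ∈ piAntidiag s n, f (x + Pi.single a 1) := by
  rw [← sum_filter_add_sum_filter_not _ (fun x => x a = 0), piAntidiag_filter_eq_zero,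
    ← sum_piAntidiag_filter_le ha]
  simp only [Nat.one_le_iff_ne_zero]

lemma piAntidiag_singleton (a : ι) (n : ℕ) : piAntidiag {a} n = {Pi.single a n} := by
  ext x
  simp only [mem_piAntidiag, sum_singleton, mem_singleton, funext_iff, Pi.single_apply]
  grind

lemma sum_piAntidiag_pair_sub {M : Type*} [AddCommGroup M] (hab : a ≠ b) (n : ℕ)
    (f : (ι → ℕ) → M) :
    ∑ x ∈ piAntidiag {a, b} n, (f (x + Pi.single b 1) - f (x + Pi.single a 1))
      = f (Pi.single b (n + 1)) - f (Pi.single a (n + 1)) := by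
  have ha := sum_piAntidiag_succ (mem_insert_self a {b}) n f
  have hb := sum_piAntidiag_succ (mem_insert_of_mem (a := b) (b := a) (mem_singleton_self b)) n f
  rw [erase_insert (by simpa using hab), piAntidiag_singleton, sum_singleton] at ha
  rw [pair_comm, erase_insert (by simpa using hab.symm), pair_comm b a, piAntidiag_singleton,
    sum_singleton, ha] at hb
  rw [sum_sub_distrib, sub_eq_sub_iff_add_eq_add, add_comm, ← hb, add_comm]

lemma sum_add_single {M : Type*} [AddCommMonoid M] [Fintype ι] (x : ι → M) (i : ι) (k : M) :
    ∑ j, (x + Pi.single i k : ι → M) j = ∑ j, x j + k := by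
  simp only [Pi.add_apply, sum_add_distrib, sum_pi_single', mem_univ, if_true]

lemma card_piAntidiag (s : Finset ι) (n : ℕ) : #(piAntidiag s n) = Nat.multichoose #s n := by
  rw [← card_finsuppAntidiag_nat_eq_multichoose, finsuppAntidiag, card_map, card_attach]

lemma card_piAntidiag_filter_le (ha : a ∈ s) (n k : ℕ) :
    #{x ∈ piAntidiag s (n + k) | k ≤ x a} = #(piAntidiag s n) := by
  rw [card_eq_sum_ones, sum_piAntidiag_filter_le ha, ← card_eq_sum_ones]

lemma card_piAntidiag_filter_eq (ha : a ∈ s) (n k : ℕ) :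
    #{x ∈ piAntidiag s (n + k) | x a = k} = #(piAntidiag (s.erase a) n) := by
  have hle : {x ∈ piAntidiag s (n + k) | x a = k}
      = {x ∈ {x ∈ piAntidiag s (n + k) | k ≤ x a} | x a = k} := by
    rw [filter_filter]
    grind
  rw [hle, card_filter, sum_piAntidiag_filter_le ha, ← piAntidiag_filter_eq_zero, card_filter]
  simp only [Pi.add_apply, Pi.single_eq_same, add_eq_right]

end Antidiagonal

section FinThree

lemma add_rotate_fin_three (m : Fin 3) :
    m + 1 + 1 = m + 2 ∧ m + 1 + 2 = m ∧ m + 2 + 1 = m ∧ m + 2 + 2 = m + 1 := by decide +revert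

lemma sum_univ_fin_three_rotate {M : Type*} [AddCommMonoid M] (f : Fin 3 → M) (m : Fin 3) :
    ∑ i, f i = f m + f (m + 1) + f (m + 2) := by
  rw [← Equiv.sum_comp (Equiv.addLeft m), Fin.sum_univ_three]
  simp

lemma univ_erase_add_two (m : Fin 3) : univ.erase (m + 2) = {m, m + 1} := by decide +revert

lemma mem_piAntidiag_side {m : Fin 3} {n : ℕ} {x : Fin 3 → ℕ} :
    x ∈ piAntidiag {m, m + 1} n ↔ x m + x (m + 1) = n ∧ x (m + 2) = 0 := by
  rw [← univ_erase_add_two, ← piAntidiag_filter_eq_zero, mem_filter, mem_piAntidiag,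
    sum_univ_fin_three_rotate x m]
  grind

lemma card_piAntidiag_fin_three (n : ℕ) :
    (#(piAntidiag (univ : Finset (Fin 3)) n) : ℝ) = (n + 2) * (n + 1) / 2 := by
  rw [card_piAntidiag, card_univ, Fintype.card_fin, Nat.multichoose_eq,
    show 3 + n - 1 = n + 2 by omega, Nat.choose_symm_add, Nat.cast_choose_two]
  push_cast
  ring

end FinThree

/-- Half the `ℓ¹` distance, the length of the segment between two points of the simplex. -/
noncomputable def segLength {ι : Type*} [Fintype ι] (u v : ι → ℝ) : ℝ :=
  (1 / 2) * ∑ i, |u i - v i|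

section SegLength
variable {ι : Type*} [Fintype ι]

lemma segLength_self (u : ι → ℝ) : segLength u u = 0 := by simp [segLength]

lemma segLength_comm (u v : ι → ℝ) : segLength u v = segLength v u := by
  simp only [segLength, abs_sub_comm]

variable [DecidableEq ι]

lemma segLength_add_single (u : ι → ℝ) {i j : ι} (hij : i ≠ j) {t : ℝ} (ht : 0 ≤ t) :
    segLength (u + Pi.single i t) (u + Pi.single j t) = t := by
  have hj : 0 ≤ (Pi.single j t : ι → ℝ) := Pi.single_nonneg.2 ht
  have hterm (l : ι) :
      |(Pi.single i t : ι → ℝ) l - (Pi.single j t : ι → ℝ) l|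
        = (Pi.single i t : ι → ℝ) l + (Pi.single j t : ι → ℝ) l := by
    rcases eq_or_ne l i with rfl | hi
    · simp [Pi.single_eq_of_ne hij, abs_of_nonneg ht]
    · simp [Pi.single_eq_of_ne hi, abs_of_nonneg (hj l)]
  simp only [segLength, Pi.add_apply, add_sub_add_left_eq_sub, hterm, sum_add_distrib,
    sum_pi_single', mem_univ, if_true]
  ring

lemma segLength_single_of_mem_stdSimplex {u : ι → ℝ} (hu : u ∈ stdSimplex ℝ ι) (i : ι) :
    segLength (Pi.single i 1) u = 1 - u i := by
  have hrest : ∑ j ∈ univ.erase i, |(Pi.single i 1 : ι → ℝ) j - u j| = 1 - u i := by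
    rw [← hu.2, ← sum_erase_eq_sub (mem_univ i)]
    refine sum_congr rfl fun j hj => ?_
    simp [Pi.single_eq_of_ne (ne_of_mem_erase hj), abs_of_nonneg (hu.1 j)]
  have hui : u i ≤ 1 := (mem_Icc_of_mem_stdSimplex hu i).2
  rw [segLength, ← add_sum_erase _ _ (mem_univ i), hrest, Pi.single_eq_same,
    abs_of_nonneg (sub_nonneg.2 hui)]
  ring

lemma segLength_eq_abs_of_mem_stdSimplex {u v : Fin 3 → ℝ} (hu : u ∈ stdSimplex ℝ (Fin 3))
    (hv : v ∈ stdSimplex ℝ (Fin 3)) {m : Fin 3} (hu0 : u (m + 2) = 0) (hv0 : v (m + 2) = 0) :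
    segLength u v = |u (m + 1) - v (m + 1)| := by
  have hum := hu.2
  have hvm := hv.2
  rw [sum_univ_fin_three_rotate _ m] at hum hvm
  have : u m - v m = -(u (m + 1) - v (m + 1)) := by linarith
  rw [segLength, sum_univ_fin_three_rotate _ m, this, abs_neg, hu0, hv0, sub_self, abs_zero]
  ring

end SegLength

/-- The indicator of a separated pair of labels. -/
def disagree {α : Type*} [DecidableEq α] (a b : α) : ℝ := if a = b then 0 else 1

lemma disagree_nonneg {α : Type*} [DecidableEq α] (a b : α) : 0 ≤ disagree a b := by
  unfold disagree
  positivity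

/-- The value on a grid edge of the form whose circulation is compared with the number of separated
edges. The ends of the edge carry the labels `a` and `b`, and the vector `s` is the sum of the two
ends. It is antisymmetric in `a` and `b`. Up to sign it is affine in the coordinate of `s` at the
third label, with the constant `4q - 1` chosen so that the three terms of a small triangle with
three labels almost cancel, the coordinates of a grid point having sum `3q`. -/
def calibration (q : ℕ) (a b : Fin 3) (s : Fin 3 → ℕ) : ℝ :=
  if a = b then 0
  else if b = a + 1 then 4 * q - 1 - 2 * s (a + 2)
  else -(4 * q - 1 - 2 * s (a + 1))

section LocalInequalities
variable {q : ℕ} {x : Fin 3 → ℕ}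

lemma sum_calibration_le_sum_disagree (hx : ∑ i, x i + 1 = 3 * q) (a : Fin 3 → Fin 3) :
    ∑ m, calibration q (a m) (a (m + 1)) (x + Pi.single m 1 + (x + Pi.single (m + 1) 1))
      ≤ ∑ m, disagree (a m) (a (m + 1)) := by
  have hx' : (x 0 + x 1 + x 2 + 1 : ℝ) = 3 * q := by
    rw [Fin.sum_univ_three] at hx
    exact_mod_cast hx
  simp only [Fin.sum_univ_three, zero_add, Fin.isValue, Fin.reduceAdd]
  generalize a 0 = a₀, a 1 = a₁, a 2 = a₂
  fin_cases a₀ <;> fin_cases a₁ <;> fin_cases a₂ <;>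
    simp only [calibration, disagree, Fin.zero_eta, Fin.mk_one, Fin.reduceFinMk, Fin.isValue,
      Fin.reduceEq, Fin.reduceAdd, zero_add, zero_ne_one, one_ne_zero, ↓reduceIte, Pi.add_apply,
      Pi.single_apply, Nat.cast_add, Nat.cast_one, Nat.cast_zero] <;>
    linarith

lemma neg_sum_calibration_le_sum_disagree (hx : ∑ i, x i + 2 = 3 * q) (a : Fin 3 → Fin 3) :
    -∑ m, calibration q (a (m + 1)) (a m)
        (x + Pi.single (m + 2) 1 + Pi.single m 1 + (x + Pi.single (m + 2) 1 + Pi.single (m + 1) 1))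
      ≤ ∑ m, disagree (a (m + 1)) (a m) := by
  have hx' : (x 0 + x 1 + x 2 + 2 : ℝ) = 3 * q := by
    rw [Fin.sum_univ_three] at hx
    exact_mod_cast hx
  simp only [Fin.sum_univ_three, zero_add, Fin.isValue, Fin.reduceAdd]
  generalize a 0 = a₀, a 1 = a₁, a 2 = a₂
  fin_cases a₀ <;> fin_cases a₁ <;> fin_cases a₂ <;>
    simp only [calibration, disagree, Fin.zero_eta, Fin.mk_one, Fin.reduceFinMk, Fin.isValue,
      Fin.reduceEq, Fin.reduceAdd, zero_add, zero_ne_one, one_ne_zero, ↓reduceIte, Pi.add_apply,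
      Pi.single_apply, Nat.cast_add, Nat.cast_one, Nat.cast_zero] <;>
    linarith

end LocalInequalities

/-- A function of the label `a` that increases by `2 (4q - 1)` from the corner `m` to the corner
`m + 1`, dominated along that side by the calibration and the separated edges. -/
def sidePotential (q : ℕ) (m a : Fin 3) : ℝ := (4 * q - 1) * (![0, 2, 1] : Fin 3 → ℝ) (a - m)

lemma sidePotential_sub_le {q : ℕ} (hq : 0 < q) {x : Fin 3 → ℕ} {m : Fin 3}
    (hx : x m + x (m + 1) + 1 = 3 * q) (hm : x (m + 2) = 0) {a b : Fin 3}
    (hab : a ≠ b → x m ≤ 2 * q ∧ x (m + 1) ≤ 2 * q) :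
    sidePotential q m b - sidePotential q m a
      ≤ 4 * q * disagree a b
        + calibration q a b (x + Pi.single m 1 + (x + Pi.single (m + 1) 1)) := by
  rcases eq_or_ne a b with rfl | hne
  · simp [disagree, calibration]
  have hx' : (x m + x (m + 1) + 1 : ℝ) = 3 * q := by exact_mod_cast hx
  have hxm : (x m : ℝ) ≤ 2 * q := by exact_mod_cast (hab hne).1
  have hxm' : (x (m + 1) : ℝ) ≤ 2 * q := by exact_mod_cast (hab hne).2
  have hq' : (1 : ℝ) ≤ q := by exact_mod_cast hq
  obtain ⟨j, rfl⟩ : ∃ j, a = m + j := ⟨a - m, by abel⟩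
  obtain ⟨k, rfl⟩ : ∃ k, b = m + k := ⟨b - m, by abel⟩
  fin_cases j <;> fin_cases k <;> first | exact absurd rfl hne | skip
  all_goals
    simp only [sidePotential, disagree, calibration, add_rotate_fin_three, hm, Fin.zero_eta,
      Fin.mk_one, Fin.reduceFinMk, Fin.isValue, Fin.reduceEq, add_zero, add_sub_cancel_left,
      Matrix.cons_val, Matrix.cons_val_zero, Matrix.cons_val_one, sub_self, add_eq_left,
      left_eq_add, add_right_inj, one_ne_zero, ↓reduceIte, Pi.add_apply, Pi.single_apply,
      Nat.cast_add, Nat.cast_one, Nat.cast_zero]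
    linarith

section LatticeSums
variable {M : Type*} [AddCommMonoid M]

/-- The sum of `F` over the edges of the triangular grid of side `n + 1`, oriented as the sides
`x + e_m → x + e_{m+1}` of the upward triangles: these contain every edge exactly once. -/
def edgeSum (n : ℕ) (F : (Fin 3 → ℕ) → (Fin 3 → ℕ) → M) : M :=
  ∑ x ∈ piAntidiag univ n, ∑ m, F (x + Pi.single m 1) (x + Pi.single (m + 1) 1)

/-- The sum of `F` over the interior edges of the grid of side `n + 2`, oriented as in `edgeSum` and
arranged as the sides of the downward triangles `x + e_i + e_j`, `i ≠ j`. -/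
def downSum (n : ℕ) (F : (Fin 3 → ℕ) → (Fin 3 → ℕ) → M) : M :=
  ∑ x ∈ piAntidiag univ n, ∑ m,
    F (x + Pi.single (m + 2) 1 + Pi.single m 1) (x + Pi.single (m + 2) 1 + Pi.single (m + 1) 1)

/-- The sum of `F` over the edges on the side of the grid of side `n + 1` from the corner `m` to the
corner `m + 1`. -/
def sideSum (m : Fin 3) (n : ℕ) (F : (Fin 3 → ℕ) → (Fin 3 → ℕ) → M) : M :=
  ∑ x ∈ piAntidiag {m, m + 1} n, F (x + Pi.single m 1) (x + Pi.single (m + 1) 1)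

lemma edgeSum_succ (n : ℕ) (F : (Fin 3 → ℕ) → (Fin 3 → ℕ) → M) :
    edgeSum (n + 1) F = ∑ m, sideSum m (n + 1) F + downSum n F := by
  rw [edgeSum, downSum, sum_comm, sum_comm (s := piAntidiag univ n), ← sum_add_distrib]
  refine sum_congr rfl fun m _ => ?_
  rw [sum_piAntidiag_succ (mem_univ (m + 2)), univ_erase_add_two, sideSum]

end LatticeSums

section Labelling
variable {q : ℕ} {L : (Fin 3 → ℕ) → Fin 3}

/-- A labelling of the grid of side `3q` that equals `i` wherever the `i`-th barycentric coordinate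
exceeds `2/3`, as do the pullbacks of cuts under `collapse q`. -/
def IsCornerLabelling (q : ℕ) (L : (Fin 3 → ℕ) → Fin 3) : Prop :=
  ∀ p : Fin 3 → ℕ, ∑ i, p i = 3 * q → ∀ i, 2 * q < p i → L p = i

lemma sum_sideSum_calibration_le {n : ℕ} (hn : n + 2 = 3 * q) (L : (Fin 3 → ℕ) → Fin 3) :
    ∑ m, sideSum m (n + 1) (fun p p' => calibration q (L p) (L p') (p + p'))
      ≤ 2 * edgeSum (n + 1) (fun p p' => disagree (L p) (L p')) := by
  set A : (Fin 3 → ℕ) → (Fin 3 → ℕ) → ℝ := fun p p' => calibration q (L p) (L p') (p + p')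
  set D : (Fin 3 → ℕ) → (Fin 3 → ℕ) → ℝ := fun p p' => disagree (L p) (L p')
  have hup : edgeSum (n + 1) A ≤ edgeSum (n + 1) D := sum_le_sum fun x hx => by
    have hx' : ∑ i, x i = n + 1 := (mem_piAntidiag.1 hx).1
    exact sum_calibration_le_sum_disagree (by omega) (fun m => L (x + Pi.single m 1))
  have hdown : -downSum n A ≤ downSum n D := by
    rw [downSum, ← sum_neg_distrib]
    refine sum_le_sum fun x hx => ?_
    have hx' : ∑ i, x i = n := (mem_piAntidiag.1 hx).1
    have := neg_sum_calibration_le_sum_disagree (q := q) (x := x) (by omega)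
      (fun m => L (x + Pi.single (m + 1) 1 + Pi.single (m + 2) 1))
    simpa only [A, D, add_rotate_fin_three, add_right_comm x (Pi.single (_ + 2) 1)
      (Pi.single (_ + 1) 1)] using this
  have hside : 0 ≤ ∑ m, sideSum m (n + 1) D :=
    sum_nonneg fun m _ => sum_nonneg fun x _ => disagree_nonneg _ _
  have hA := edgeSum_succ n A
  have hD := edgeSum_succ n D
  linarith

lemma two_mul_le_sideSum (hq : 0 < q) (hL : IsCornerLabelling q L) {n : ℕ} (hn : n + 1 = 3 * q)
    (m : Fin 3) :
    2 * (4 * q - 1) ≤ 4 * q * sideSum m n (fun p p' => disagree (L p) (L p'))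
      + sideSum m n (fun p p' => calibration q (L p) (L p') (p + p')) := by
  have hne : m ≠ m + 1 := by decide +revert
  have hcorner (i : Fin 3) : L (Pi.single i (n + 1)) = i :=
    hL _ (by simp [hn]) i (by simp only [Pi.single_eq_same]; omega)
  have htele := sum_piAntidiag_pair_sub hne n fun p => sidePotential q m (L p)
  rw [hcorner, hcorner] at htele
  have hends : sidePotential q m (m + 1) - sidePotential q m m = 2 * (4 * q - 1) := by
    simp only [sidePotential, add_sub_cancel_left, sub_self, Matrix.cons_val_one,
      Matrix.cons_val_zero, mul_zero, sub_zero]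
    ring
  rw [← hends, ← htele, sideSum, sideSum, mul_sum, ← sum_add_distrib]
  refine sum_le_sum fun x hx => ?_
  obtain ⟨hsum, hm⟩ := mem_piAntidiag_side.1 hx
  have htot : ∑ j, x j + 1 = 3 * q := by
    rw [sum_univ_fin_three_rotate x m]
    omega
  refine sidePotential_sub_le hq (by omega) hm fun hdis => ?_
  contrapose! hdis
  obtain ⟨i, hi⟩ : ∃ i, 2 * q < x i := by grind
  rw [hL _ ((sum_add_single x m 1).trans htot) i (by simp only [Pi.add_apply]; omega),
    hL _ ((sum_add_single x (m + 1) 1).trans htot) i (by simp only [Pi.add_apply]; omega)]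

end Labelling

/-- The point `p / (3q)` of the simplex, moved to the `i`-th vertex if its `i`-th coordinate exceeds
`2/3`. -/
noncomputable def collapse {ι : Type*} [Fintype ι] (q : ℕ) (p : ι → ℕ) : ι → ℝ := fun i =>
  if ∃ j, 2 * q < p j then if 2 * q < p i then 1 else 0 else p i / (3 * q)

section Collapse
variable {ι : Type*} [Fintype ι] {q : ℕ} {p x : ι → ℕ}

lemma collapse_of_lt [DecidableEq ι] (hp : ∑ i, p i = 3 * q) {m : ι} (hm : 2 * q < p m) :
    collapse q p = Pi.single m 1 := by
  ext i
  rw [collapse, if_pos ⟨m, hm⟩, Pi.single_apply]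
  rcases eq_or_ne i m with rfl | hi
  · rw [if_pos hm, if_pos rfl]
  · have := add_le_sum (fun j _ => Nat.zero_le (p j)) (mem_univ i) (mem_univ m) hi
    rw [if_neg (by omega), if_neg hi]

lemma collapse_add_single_of_le [DecidableEq ι] {i : ι}
    (hx : ∀ j, (x + Pi.single i 1 : ι → ℕ) j ≤ 2 * q) :
    collapse q (x + Pi.single i 1)
      = (fun j => (x j : ℝ) / (3 * q)) + Pi.single i (1 / (3 * q : ℝ)) := by
  ext j
  rw [collapse, if_neg (by push Not; exact hx)]
  rcases eq_or_ne j i with rfl | hj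
  · simp [add_div]
  · simp [hj]

lemma collapse_mem_stdSimplex (hq : 0 < q) (hp : ∑ i, p i = 3 * q) :
    collapse q p ∈ stdSimplex ℝ ι := by
  classical
  by_cases h : ∃ m, 2 * q < p m
  · obtain ⟨m, hm⟩ := h
    rw [collapse_of_lt hp hm]
    exact single_mem_stdSimplex ℝ m
  · have hp' : ∑ i, (p i : ℝ) = 3 * q := by exact_mod_cast hp
    refine ⟨fun i => ?_, ?_⟩
    · rw [collapse, if_neg h]
      positivity
    · simp only [collapse, if_neg h, ← sum_div, hp']
      exact div_self (by positivity)

lemma collapse_apply_mono {p' : ι → ℕ} (hp : ∑ i, p i = 3 * q) {i : ι}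
    (hi : p i ≤ p' i) (hne : ∀ j ≠ i, p' j ≤ p j) : collapse q p i ≤ collapse q p' i := by
  have hle : p i ≤ 3 * q := hp ▸ single_le_sum_of_canonicallyOrdered (mem_univ i)
  have hfrac : (p i : ℝ) / (3 * q) ≤ 1 := div_le_one_of_le₀ (mod_cast hle) (by positivity)
  unfold collapse
  by_cases hbig : 2 * q < p' i
  · rw [if_pos (⟨i, hbig⟩ : ∃ j, 2 * q < p' j), if_pos hbig]
    split_ifs <;> linarith
  by_cases h : ∃ j, 2 * q < p j
  · rw [if_pos h, if_neg (by omega)]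
    positivity
  · have h' : ¬∃ j, 2 * q < p' j := by grind
    rw [if_neg h, if_neg h']
    gcongr

end Collapse

/-- The contribution, in units of `1 / (3q)`, of one coordinate `t` of `x` to the perimeter of the
collapsed upward triangle at `x`. A coordinate above `2q` collapses the triangle to a point, so it
cancels the contributions `1` of the other two. -/
noncomputable def perimeterShare (q t : ℕ) : ℝ :=
  if 2 * q < t then -2 else if t = 2 * q then 2 * q - 1 else 1

section Perimeter
variable {q n : ℕ} {x : Fin 3 → ℕ}

lemma perimeter_collapse_of_lt (hx : ∑ i, x i + 1 = 3 * q) {l : Fin 3} (hl : 2 * q < x l) :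
    ∑ m, segLength (collapse q (x + Pi.single m 1)) (collapse q (x + Pi.single (m + 1) 1)) = 0 := by
  have hcoll (i : Fin 3) : collapse q (x + Pi.single i 1) = Pi.single l 1 :=
    collapse_of_lt ((sum_add_single x i 1).trans hx) (by simp only [Pi.add_apply]; omega)
  simp only [hcoll, segLength_self, sum_const_zero]

lemma perimeter_collapse_of_eq (hq : 0 < q) (hx : ∑ i, x i + 1 = 3 * q) {l : Fin 3}
    (hl : x l = 2 * q) :
    ∑ m, segLength (collapse q (x + Pi.single m 1)) (collapse q (x + Pi.single (m + 1) 1))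
      = (2 * q + 1) / (3 * q) := by
  have hsum (i : Fin 3) := (sum_add_single x i 1).trans hx
  have hle {i : Fin 3} (hi : i ≠ l) (j : Fin 3) : (x + Pi.single i 1 : Fin 3 → ℕ) j ≤ 2 * q := by
    have hil : (x + Pi.single i 1 : Fin 3 → ℕ) l = 2 * q := by simp [hi.symm, hl]
    rcases eq_or_ne j l with rfl | hj
    · exact hil.le
    · have := add_le_sum (fun k _ => Nat.zero_le ((x + Pi.single i 1 : Fin 3 → ℕ) k))
        (mem_univ j) (mem_univ l) hj
      have := hsum i
      omega
  have hcorner : collapse q (x + Pi.single l 1) = Pi.single l 1 :=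
    collapse_of_lt (hsum l) (by simp [hl])
  have h1 : l + 1 ≠ l := by simp
  have h2 : l + 2 ≠ l := by simp
  have h12 : l + 1 ≠ l + 2 := by simp
  have hrest {i : Fin 3} (hi : i ≠ l) :
      segLength (Pi.single l 1) (collapse q (x + Pi.single i 1)) = 1 - 2 * q / (3 * q) := by
    rw [segLength_single_of_mem_stdSimplex (collapse_mem_stdSimplex hq (hsum i)),
      collapse_add_single_of_le (hle hi)]
    simp [hi.symm, hl]
  have hopp : segLength (collapse q (x + Pi.single (l + 1) 1))
      (collapse q (x + Pi.single (l + 2) 1)) = 1 / (3 * q) := by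
    rw [collapse_add_single_of_le (hle h1), collapse_add_single_of_le (hle h2),
      segLength_add_single _ h12 (by positivity)]
  simp only [sum_univ_fin_three_rotate _ l, add_rotate_fin_three, hcorner, hrest h1, hopp,
    segLength_comm _ (Pi.single l 1), hrest h2]
  field_simp
  ring

lemma perimeter_collapse_of_forall_lt (hx : ∀ l, x l < 2 * q) :
    ∑ m, segLength (collapse q (x + Pi.single m 1)) (collapse q (x + Pi.single (m + 1) 1))
      = 1 / q := by
  have hcoll (i : Fin 3) := collapse_add_single_of_le (q := q) (x := x) (i := i) fun j => by
    have := hx j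
    simp only [Pi.add_apply, Pi.single_apply]
    grind
  have hne (m : Fin 3) : m ≠ m + 1 := by simp
  have hlen (m : Fin 3) := segLength_add_single (fun j => (x j : ℝ) / (3 * q)) (hne m)
    (t := 1 / (3 * q)) (by positivity)
  simp only [hcoll, hlen, Fin.sum_const, nsmul_eq_mul]
  ring

lemma perimeter_collapse (hq : 0 < q) (hx : ∑ i, x i + 1 = 3 * q) :
    ∑ m, segLength (collapse q (x + Pi.single m 1)) (collapse q (x + Pi.single (m + 1) 1))
      = (∑ m, perimeterShare q (x m)) / (3 * q) := by
  by_cases h : ∀ l, x l < 2 * q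
  · have hshare (m : Fin 3) : perimeterShare q (x m) = 1 := by
      rw [perimeterShare, if_neg (h m).not_gt, if_neg (h m).ne]
    simp only [perimeter_collapse_of_forall_lt h, hshare, Fin.sum_const, nsmul_eq_mul]
    ring
  · push Not at h
    obtain ⟨l, hl⟩ := h
    have hx' := hx
    rw [sum_univ_fin_three_rotate _ l] at hx'
    have h1 : perimeterShare q (x (l + 1)) = 1 := by grind [perimeterShare]
    have h2 : perimeterShare q (x (l + 2)) = 1 := by grind [perimeterShare]
    rw [sum_univ_fin_three_rotate (fun m => perimeterShare q (x m)) l, h1, h2]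
    rcases hl.lt_or_eq with hlt | heq
    · rw [perimeter_collapse_of_lt hx hlt, perimeterShare, if_pos hlt]
      norm_num
    · rw [perimeter_collapse_of_eq hq hx heq.symm, perimeterShare, if_neg heq.not_lt,
        if_pos heq.symm]
      ring

lemma perimeterShare_eq (q t : ℕ) :
    perimeterShare q t
      = 1 - 3 * (if 2 * q ≤ t then 1 else 0) + (2 * q + 1) * (if t = 2 * q then 1 else 0) := by
  unfold perimeterShare
  split_ifs <;> first | omega | ring

lemma sum_perimeterShare (hq : 0 < q) (hn : n + 1 = 3 * q) (m : Fin 3) :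
    ∑ x ∈ piAntidiag univ n, perimeterShare q (x m) = 5 * q ^ 2 + q := by
  obtain ⟨k, rfl⟩ := Nat.exists_eq_add_of_le' hq
  obtain rfl : n = k + 2 * (k + 1) := by omega
  simp only [perimeterShare_eq, sum_add_distrib, sum_sub_distrib, ← mul_sum, sum_boole, sum_const,
    nsmul_eq_mul, card_piAntidiag_filter_le (mem_univ m), card_piAntidiag_filter_eq (mem_univ m),
    card_piAntidiag_fin_three, card_piAntidiag (univ.erase m), card_erase_of_mem (mem_univ m),
    card_univ, Fintype.card_fin, Nat.add_one_sub_one, Nat.multichoose_two]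
  push_cast
  ring

lemma edgeSum_collapse (hq : 0 < q) (hn : n + 1 = 3 * q) :
    edgeSum n (fun p p' => segLength (collapse q p) (collapse q p')) = 5 * q + 1 := by
  have hperimeter : ∀ x ∈ piAntidiag (univ : Finset (Fin 3)) n,
      ∑ m, segLength (collapse q (x + Pi.single m 1)) (collapse q (x + Pi.single (m + 1) 1))
        = (∑ m, perimeterShare q (x m)) / (3 * q) := fun x hx =>
    perimeter_collapse hq (by rw [(mem_piAntidiag.1 hx).1, hn])
  rw [edgeSum, sum_congr rfl hperimeter, ← sum_div, sum_comm]
  simp only [sum_perimeterShare hq hn, Fin.sum_const, nsmul_eq_mul, Nat.cast_ofNat]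
  field_simp

lemma sideSum_collapse (hq : 0 < q) (hn : n + 1 = 3 * q) (m : Fin 3) :
    sideSum m n (fun p p' => segLength (collapse q p) (collapse q p')) = 1 := by
  have hterm : ∀ x ∈ piAntidiag {m, m + 1} n,
      segLength (collapse q (x + Pi.single m 1)) (collapse q (x + Pi.single (m + 1) 1))
        = collapse q (x + Pi.single (m + 1) 1) (m + 1)
          - collapse q (x + Pi.single m 1) (m + 1) := fun x hx => by
    obtain ⟨hsum, hm⟩ := mem_piAntidiag_side.1 hx
    have htot (i : Fin 3) : ∑ j, (x + Pi.single i 1 : Fin 3 → ℕ) j = 3 * q := by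
      rw [sum_add_single, sum_univ_fin_three_rotate x m]
      omega
    have hzero {i : Fin 3} (hi : i ≠ m + 2) : collapse q (x + Pi.single i 1) (m + 2) = 0 := by
      simp [collapse, hm, hi.symm]
    have hmono := collapse_apply_mono (p' := x + Pi.single (m + 1) 1) (i := m + 1) (htot m)
      (by simp) fun j hj => by simp [hj]
    rw [segLength_eq_abs_of_mem_stdSimplex (m := m) (collapse_mem_stdSimplex hq (htot m))
      (collapse_mem_stdSimplex hq (htot (m + 1))) (hzero (by simp)) (hzero (by simp)),
      abs_sub_comm, abs_of_nonneg (sub_nonneg.2 hmono)]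
  have hcorner (i : Fin 3) : collapse q (Pi.single i (n + 1)) = Pi.single i 1 :=
    collapse_of_lt (by simp [hn]) (by simp only [Pi.single_eq_same]; omega)
  rw [sideSum, sum_congr rfl hterm,
    sum_piAntidiag_pair_sub (by simp) n fun p => collapse q p (m + 1), hcorner, hcorner]
  simp

end Perimeter

/-- The weight of the edge `x + e_m → x + e_{m+1}`, which is on the boundary of the grid if and only
if `x (m + 2) = 0`. -/
def dualWeight (q : ℕ) (x : Fin 3 → ℕ) (m : Fin 3) : ℝ := if x (m + 2) = 0 then 4 * q + 2 else 2

/-- The sum of `F` over the edges of the grid of side `n + 1`, weighted by `dualWeight`. -/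
def dualSum (q n : ℕ) (F : (Fin 3 → ℕ) → (Fin 3 → ℕ) → ℝ) : ℝ :=
  ∑ x ∈ piAntidiag univ n, ∑ m, dualWeight q x m * F (x + Pi.single m 1) (x + Pi.single (m + 1) 1)

section DualSum
variable {q n : ℕ}

lemma dualSum_eq (q n : ℕ) (F : (Fin 3 → ℕ) → (Fin 3 → ℕ) → ℝ) :
    dualSum q n F = 2 * edgeSum n F + 4 * q * ∑ m, sideSum m n F := by
  have hside (m : Fin 3) : sideSum m n F = ∑ x ∈ piAntidiag univ n,
      if x (m + 2) = 0 then F (x + Pi.single m 1) (x + Pi.single (m + 1) 1) else 0 := by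
    rw [sideSum, ← univ_erase_add_two, ← piAntidiag_filter_eq_zero, sum_filter]
  simp only [dualSum, edgeSum, hside]
  rw [sum_comm (s := univ), mul_sum, mul_sum, ← sum_add_distrib]
  refine sum_congr rfl fun x _ => ?_
  rw [mul_sum, mul_sum, ← sum_add_distrib]
  refine sum_congr rfl fun m _ => ?_
  unfold dualWeight
  split_ifs <;> ring

lemma dualSum_collapse (hq : 0 < q) (hn : n + 1 = 3 * q) :
    dualSum q n (fun p p' => segLength (collapse q p) (collapse q p')) = 22 * q + 2 := by
  simp only [dualSum_eq, edgeSum_collapse hq hn, sideSum_collapse hq hn, Fin.sum_const,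
    nsmul_eq_mul]
  ring

lemma le_dualSum_disagree {L : (Fin 3 → ℕ) → Fin 3} (hq : 0 < q) (hn : n + 1 = 3 * q)
    (hL : IsCornerLabelling q L) :
    24 * q - 6 ≤ dualSum q n (fun p p' => disagree (L p) (L p')) := by
  obtain ⟨k, rfl⟩ : ∃ k, n = k + 1 := ⟨n - 1, by omega⟩
  have hinterior := sum_sideSum_calibration_le (by omega) L
  have hsides := sum_le_sum fun m (_ : m ∈ univ) => two_mul_le_sideSum hq hL hn m
  rw [Fin.sum_const, sum_add_distrib, ← mul_sum, nsmul_eq_mul] at hsides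
  rw [dualSum_eq]
  push_cast at hsides
  linarith

lemma dualSum_const_mul (t : ℝ) (F : (Fin 3 → ℕ) → (Fin 3 → ℕ) → ℝ) :
    dualSum q n (fun p p' => t * F p p') = t * dualSum q n F := by
  simp only [dualSum, mul_sum, mul_left_comm]

lemma dualSum_mono (hn : n + 1 = 3 * q) {F G : (Fin 3 → ℕ) → (Fin 3 → ℕ) → ℝ}
    (h : ∀ p p', ∑ i, p i = 3 * q → ∑ i, p' i = 3 * q → F p p' ≤ G p p') :
    dualSum q n F ≤ dualSum q n G := by
  refine sum_le_sum fun x hx => sum_le_sum fun m _ => mul_le_mul_of_nonneg_left ?_ ?_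
  · have hsum (i : Fin 3) : ∑ j, (x + Pi.single i 1 : Fin 3 → ℕ) j = 3 * q := by
      rw [sum_add_single, (mem_piAntidiag.1 hx).1, hn]
    exact h _ _ (hsum m) (hsum (m + 1))
  · unfold dualWeight
    positivity

lemma integral_dualSum {Ω : Type*} [MeasurableSpace Ω] {μ : Measure Ω}
    {F : Ω → (Fin 3 → ℕ) → (Fin 3 → ℕ) → ℝ} (hF : ∀ p p', Integrable (fun ω => F ω p p') μ) :
    ∫ ω, dualSum q n (F ω) ∂μ = dualSum q n (fun p p' => ∫ ω, F ω p p' ∂μ) := by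
  unfold dualSum
  rw [integral_finsetSum _ fun x _ => integrable_finsetSum _ fun m _ => (hF _ _).const_mul _]
  refine sum_congr rfl fun x _ => ?_
  rw [integral_finsetSum _ fun m _ => (hF _ _).const_mul _]
  exact sum_congr rfl fun m _ => integral_const_mul _ _

lemma integrable_dualSum {Ω : Type*} [MeasurableSpace Ω] {μ : Measure Ω}
    {F : Ω → (Fin 3 → ℕ) → (Fin 3 → ℕ) → ℝ} (hF : ∀ p p', Integrable (fun ω => F ω p p') μ) :
    Integrable (fun ω => dualSum q n (F ω)) μ :=
  integrable_finsetSum _ fun _ _ => integrable_finsetSum _ fun _ _ => (hF _ _).const_mul _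

end DualSum

section Scheme
variable {Ω : Type*} [MeasurableSpace Ω] {μ : Measure Ω} [IsProbabilityMeasure μ]
  {c : Ω → (Fin 3 → ℝ) → Fin 3} {τ : ℝ}

lemma sub_le_density_mul (hterm : ∀ ω : Ω, ∀ i : Fin 3, c ω (Pi.single i 1) = i)
    (hτ : ∀ x ∈ stdSimplex ℝ (Fin 3), ∀ y ∈ stdSimplex ℝ (Fin 3),
      (μ {ω : Ω | c ω x ≠ c ω y}).toReal ≤ τ * segLength x y) {q : ℕ} (hq : 0 < q) :
    24 * q - 6 ≤ τ * (22 * q + 2) := by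
  obtain ⟨n, hn⟩ : ∃ n, n + 1 = 3 * q := ⟨3 * q - 1, by omega⟩
  let cut (p p' : Fin 3 → ℕ) : Set Ω :=
    toMeasurable μ {ω | c ω (collapse q p) ≠ c ω (collapse q p')}
  have hcut (p p' : Fin 3 → ℕ) : Integrable ((cut p p').indicator (1 : Ω → ℝ)) μ :=
    (integrable_const 1).indicator (measurableSet_toMeasurable _ _)
  calc 24 * q - 6
      = ∫ _, (24 * q - 6 : ℝ) ∂μ := by simp
    _ ≤ ∫ ω, dualSum q n (fun p p' => (cut p p').indicator 1 ω) ∂μ := by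
        refine integral_mono (integrable_const _) (integrable_dualSum hcut) fun ω => ?_
        have hL : IsCornerLabelling q fun p => c ω (collapse q p) := fun p hp i hi => by
          simp only [collapse_of_lt hp hi, hterm]
        refine (le_dualSum_disagree hq hn hL).trans (dualSum_mono hn fun p p' _ _ => ?_)
        unfold disagree
        split_ifs with heq
        · exact Set.indicator_nonneg (fun _ _ => zero_le_one) _
        · rw [Set.indicator_of_mem (subset_toMeasurable μ _ heq), Pi.one_apply]
    _ = dualSum q n (fun p p' => ∫ ω, (cut p p').indicator 1 ω ∂μ) := integral_dualSum hcut
    _ ≤ dualSum q n (fun p p' => τ * segLength (collapse q p) (collapse q p')) := by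
        refine dualSum_mono hn fun p p' hp hp' => ?_
        rw [integral_indicator_one (measurableSet_toMeasurable _ _), measureReal_def,
          measure_toMeasurable]
        exact hτ _ (collapse_mem_stdSimplex hq hp) _ (collapse_mem_stdSimplex hq hp')
    _ = τ * (22 * q + 2) := by rw [dualSum_const_mul, dualSum_collapse hq hn]

end Scheme

end ThreeWayCut

theorem three_way_cutting_scheme_density_ge_general
    {Ω : Type*} [MeasurableSpace Ω] (μ : Measure Ω) [IsProbabilityMeasure μ]
    (c : Ω → (Fin 3 → ℝ) → Fin 3)
    (hterm : ∀ ω : Ω, ∀ i : Fin 3, c ω (Pi.single i 1) = i)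
    (τ : ℝ)
    (hτ : ∀ x ∈ stdSimplex ℝ (Fin 3), ∀ y ∈ stdSimplex ℝ (Fin 3),
      (μ {ω : Ω | c ω x ≠ c ω y}).toReal ≤ τ * ((1 / 2) * ∑ i, |x i - y i|)) :
    12 / 11 ≤ τ := by
  have hbound {q : ℕ} (hq : 0 < q) : 24 * q - 6 ≤ τ * (22 * q + 2) :=
    ThreeWayCut.sub_le_density_mul hterm hτ hq
  have hτ₀ : 0 ≤ τ := by
    have := hbound one_pos
    norm_num at this
    linarith
  by_contra! hlt
  have hpos : 0 < 24 - 22 * τ := by linarith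
  obtain ⟨q, hq⟩ := exists_nat_gt ((6 + 2 * τ) / (24 - 22 * τ))
  have hq₀ : (0 : ℝ) < q := (by positivity : 0 ≤ (6 + 2 * τ) / (24 - 22 * τ)).trans_lt hq
  rw [div_lt_iff₀ hpos] at hq
  linarith [hbound (Nat.cast_pos.1 hq₀)]

/-- Every 3-way cutting scheme with maximum density at most `τ`
satisfies `τ ≥ 12/11`, i.e. the minimal maximum density (and hence the integrality gap
of the geometric relaxation) for three terminals is at least `12/11`. -/
theorem three_way_cutting_scheme_density_ge
    (Ω : Type) [MeasurableSpace Ω] (μ : Measure Ω) [IsProbabilityMeasure μ]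
    (c : Ω → (Fin 3 → ℝ) → Fin 3)
    (hterm : ∀ ω : Ω, ∀ i : Fin 3, c ω (Pi.single i 1) = i)
    (hmeas : ∀ x ∈ stdSimplex ℝ (Fin 3), ∀ y ∈ stdSimplex ℝ (Fin 3),
      MeasurableSet {ω : Ω | c ω x ≠ c ω y})
    (τ : ℝ)
    (hτ : ∀ x ∈ stdSimplex ℝ (Fin 3), ∀ y ∈ stdSimplex ℝ (Fin 3),
      (μ {ω : Ω | c ω x ≠ c ω y}).toReal ≤ τ * ((1 / 2) * ∑ i, |x i - y i|)) :
    12 / 11 ≤ τ :=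
  three_way_cutting_scheme_density_ge_general μ c hterm τ hτ
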